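/- Let q ∈ ℂ with 0 < |q| < 1, and let a, b, c, e, f, x, y, z ∈ ℂ with e ≠ 0, e ≠ q^n and f ≠ q^n for all integers n ≥ 1, f ≠ q^{−n} and e ≠ q^{n+1} for all integers n ≥ 0, and let r be a real number with max(|x|, |y|, |f/e|) < r < min(1, 1/|z|) (where 1/|z| is interpreted as +∞ if z = 0). Then ∑_{j,k,m ≥ 0} (a;q)_j (b;q)_k (c;q)_m (e;q)_{j+k−m} / ((q;q)_j (q;q)_k (q;q)_m (f;q)_{j+k−m}) · x^j y^k z^m converges absolutely and equals (2πi)^{−1} ∮_{|t|=r} F(t) · dt/t, the contour being the positively oriented circle of radius r about the origin, where F(t) = (q;q)_∞ (f/e;q)_∞ (et;q)_∞ (q/(et);q)_∞ (ax/t;q)_∞ (by/t;q)_∞ (czt;q)_∞ / ((f;q)_∞ (q/e;q)_∞ (t;q)_∞ (f/(et);q)_∞ (x/t;q)_∞ (y/t;q)_∞ (zt;q)_∞). -/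

import Mathlib

open Finset

/-- The `q`-shifted factorial `(a;q)_n` for an arbitrary integer `n`. -/
noncomputable def qpoch (q a : ℂ) (n : ℤ) : ℂ :=
  if 0 ≤ n then ∏ i ∈ Finset.range n.toNat, (1 - a * q ^ (i : ℤ))
  else (∏ i ∈ Finset.range (-n).toNat, (1 - a * q ^ (n + (i : ℤ))))⁻¹

/-- The infinite `q`-shifted factorial `(a;q)_∞`. -/
noncomputable def qinf (q a : ℂ) : ℂ := ∏' i : ℕ, (1 - a * q ^ i)

/-- General term of the triple series with parameters `a, b, c, e, f`. -/
noncomputable def tripleTerm (q a b c e f x y z : ℂ) : ℕ × ℕ × ℕ → ℂ := fun p =>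
  qpoch q a (p.1 : ℤ) * qpoch q b (p.2.1 : ℤ) * qpoch q c (p.2.2 : ℤ) *
      qpoch q e ((p.1 : ℤ) + (p.2.1 : ℤ) - (p.2.2 : ℤ)) /
    (qpoch q q (p.1 : ℤ) * qpoch q q (p.2.1 : ℤ) * qpoch q q (p.2.2 : ℤ) *
      qpoch q f ((p.1 : ℤ) + (p.2.1 : ℤ) - (p.2.2 : ℤ))) *
    x ^ p.1 * y ^ p.2.1 * z ^ p.2.2

/-- The integrand of the contour-integral representation of the triple series. -/
noncomputable def integrandF (q a b c e f x y z t : ℂ) : ℂ :=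
  qinf q q * qinf q (f / e) * qinf q (e * t) * qinf q (q / (e * t)) * qinf q (a * x / t) *
      qinf q (b * y / t) * qinf q (c * z * t) /
    (qinf q f * qinf q (q / e) * qinf q t * qinf q (f / (e * t)) * qinf q (x / t) *
      qinf q (y / t) * qinf q (z * t))

/-!
The triple sum is the constant term in `t` of a product of four Laurent series, `₁ψ₁(e; f; q, t)`
and the `q`-binomial series in `x / t`, `y / t` and `z * t`. On the circle `|t| = r` all four
converge absolutely, by Ramanujan's `₁ψ₁` summation and the `q`-binomial theorem, and the product of
their sums is the integrand; integrating term by term extracts the constant term.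

For Ramanujan's summation, multiply the series by `(f;q)_∞`. A contiguity relation between `f` and
`f q`, iterated, reduces the sum to the case `f = 0`. If `|q| < |e t|`, that case follows from the
same reduction at `f = q`, where the terms with negative index vanish and the `q`-binomial theorem
gives the sum. Smaller values of `|e t|` are reached by re-indexing the series, which replaces `e`
by `e / q`.
-/

open Filter Topology Metric

section RatioTest

lemma summable_norm_of_succ_eq_mul {R : Type*} [SeminormedRing R] {u ρ : ℕ → R} {l : ℝ}
    (hu : ∀ n, u (n + 1) = ρ n * u n) (hρ : Tendsto (fun n => ‖ρ n‖) atTop (𝓝 l)) (hl : l < 1) :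
    Summable fun n => ‖u n‖ := by
  obtain ⟨r, hlr, hr⟩ := exists_between hl
  refine summable_of_ratio_norm_eventually_le hr ?_
  filter_upwards [hρ.eventually_le_const hlr] with n hn
  rw [norm_norm, norm_norm, hu]
  exact (norm_mul_le _ _).trans (mul_le_mul_of_nonneg_right hn (norm_nonneg _))

lemma summable_norm_of_add_one_eq_mul {𝕜 : Type*} [NormedDivisionRing 𝕜] {u ρ : ℤ → 𝕜}
    {l l' : ℝ} (hu : ∀ n, u (n + 1) = ρ n * u n) (hρ : ∀ n < 0, ρ n ≠ 0)
    (htop : Tendsto (fun n : ℕ => ‖ρ n‖) atTop (𝓝 l)) (hl : l < 1)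
    (hbot : Tendsto (fun n : ℕ => ‖(ρ (-(n + 1)))⁻¹‖) atTop (𝓝 l')) (hl' : l' < 1) :
    Summable fun n => ‖u n‖ := by
  refine Summable.of_nat_of_neg
    (summable_norm_of_succ_eq_mul (fun n => mod_cast hu n) htop hl)
    (summable_norm_of_succ_eq_mul (fun n => ?_) hbot hl')
  have hstep := hu (-(n + 1))
  rw [neg_add, neg_add_cancel_right, ← neg_add] at hstep
  rw [hstep, inv_mul_cancel_left₀ (hρ _ (by lia)), Nat.cast_succ]

end RatioTest

section ConstantTerm

variable {ι : Type*} {c : ℂ} {r : ℝ}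

lemma hasSum_mul_of_hasSum {κ 𝕜 : Type*} [RCLike 𝕜] {f : ι → 𝕜} {g : κ → 𝕜} {s t : 𝕜}
    (hf : HasSum f s) (hg : HasSum g t) :
    HasSum (fun p : ι × κ => f p.1 * g p.2) (s * t) :=
  hf.mul hg (summable_mul_of_summable_norm hf.summable.norm hg.summable.norm)

lemma hasSum_circleIntegral_of_norm_le [Countable ι] {E : Type*} [NormedAddCommGroup E]
    [NormedSpace ℂ E] {f : ι → ℂ → E} {F : ℂ → E} {b : ι → ℝ} (hr : 0 ≤ r)
    (hf : ∀ i, ContinuousOn (f i) (sphere c r)) (hb : Summable b)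
    (hfb : ∀ i, ∀ t ∈ sphere c r, ‖f i t‖ ≤ b i)
    (hF : ∀ t ∈ sphere c r, HasSum (fun i => f i t) (F t)) :
    HasSum (fun i => ∮ t in C(c, r), f i t) (∮ t in C(c, r), F t) := by
  have hmem (θ : ℝ) : circleMap c r θ ∈ sphere c r := circleMap_mem_sphere c hr θ
  refine intervalIntegral.hasSum_integral_of_dominated_convergence (fun i _ => r * b i)
    (fun i => ((hf i).circleIntegrable hr).out.def'.aestronglyMeasurable)
    (fun i => .of_forall fun θ _ => ?_) (.of_forall fun θ _ => hb.mul_left r)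
    intervalIntegrable_const (.of_forall fun θ _ => (hF _ (hmem θ)).const_smul _)
  rw [norm_smul, deriv_circleMap, norm_mul, norm_circleMap_zero, Complex.norm_I, mul_one,
    abs_of_nonneg hr]
  exact mul_le_mul_of_nonneg_left (hfb i _ (hmem θ)) hr

lemma circleIntegral_mul_zpow_div (hr : 0 < r) (a : ℂ) (n : ℤ) :
    (∮ t in C(c, r), a * (t - c) ^ n / (t - c)) =
      2 * Real.pi * Complex.I * if n = 0 then a else 0 := by
  have hmonomial : (∮ t in C(c, r), a * (t - c) ^ n / (t - c)) =
      a * ∮ t in C(c, r), (t - c) ^ (n - 1) := by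
    rw [← circleIntegral.integral_const_mul]
    refine circleIntegral.integral_congr hr.le fun t ht => ?_
    rw [zpow_sub_one₀ (sub_ne_zero.2 (ne_of_mem_sphere ht hr.ne')), mul_div_assoc, div_eq_mul_inv]
  rw [hmonomial]
  split_ifs with hn
  · simp only [hn, zero_sub, zpow_neg_one, circleIntegral.integral_sub_center_inv c hr.ne']
    ring
  · rw [circleIntegral.integral_sub_zpow_of_ne (by lia), mul_zero, mul_zero]

lemma hasSum_circleIntegral_of_hasSum_zpow [Countable ι] {a : ι → ℂ} {d : ι → ℤ} {F : ℂ → ℂ}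
    (hr : 0 < r) (hF : ∀ t ∈ sphere c r, HasSum (fun i => a i * (t - c) ^ d i) (F t)) :
    HasSum (fun i => if d i = 0 then a i else 0)
      ((2 * (Real.pi : ℂ) * Complex.I)⁻¹ * ∮ t in C(c, r), F t / (t - c)) := by
  have hne {t : ℂ} (ht : t ∈ sphere c r) : t - c ≠ 0 := sub_ne_zero.2 (ne_of_mem_sphere ht hr.ne')
  have hsum : Summable fun i => ‖a i‖ * r ^ d i := by
    have h := (hF (c + r) (by simp [hr.le])).summable.norm
    simpa [norm_mul, norm_zpow, abs_of_pos hr] using h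
  have hint := hasSum_circleIntegral_of_norm_le
    (f := fun i t => a i * (t - c) ^ d i / (t - c)) hr.le
    (fun i t ht => by
      have := hne ht
      fun_prop (disch := simp [this]))
    (hsum.div_const r)
    (fun i t ht => by
      rw [norm_div, norm_mul, norm_zpow, mem_sphere_iff_norm.1 ht])
    (fun t ht => (hF t ht).div_const (t - c))
  simp only [circleIntegral_mul_zpow_div hr] at hint
  simpa only [inv_mul_cancel_left₀ Complex.two_pi_I_ne_zero] using
    hint.mul_left (2 * (Real.pi : ℂ) * Complex.I)⁻¹

lemma hasSum_circleIntegral_mul_of_hasSum_zpow [Countable ι] {a : ℤ → ℂ} {b : ι → ℂ} {d : ι → ℤ}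
    {A B : ℂ → ℂ} (hr : 0 < r) (hA : ∀ t ∈ sphere c r, HasSum (fun n => a n * (t - c) ^ n) (A t))
    (hB : ∀ t ∈ sphere c r, HasSum (fun i => b i * (t - c) ^ (-d i)) (B t)) :
    HasSum (fun i => a (d i) * b i)
      ((2 * (Real.pi : ℂ) * Complex.I)⁻¹ * ∮ t in C(c, r), A t * B t / (t - c)) := by
  have hAB : ∀ t ∈ sphere c r,
      HasSum (fun p : ℤ × ι => a p.1 * b p.2 * (t - c) ^ (p.1 - d p.2)) (A t * B t) := by
    intro t ht
    refine (hasSum_mul_of_hasSum (hA t ht) (hB t ht)).congr_fun fun p => ?_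
    rw [sub_eq_add_neg p.1, zpow_add₀ (sub_ne_zero.2 (ne_of_mem_sphere ht hr.ne'))]
    ring
  have hinj : Function.Injective fun i => (d i, i) := fun _ _ h => (Prod.ext_iff.1 h).2
  have hconst := hasSum_circleIntegral_of_hasSum_zpow hr hAB
  rw [← hinj.hasSum_iff fun p hp => if_neg fun h => hp ⟨p.2, Prod.ext (sub_eq_zero.1 h).symm rfl⟩]
    at hconst
  simpa [Function.comp_def] using hconst

end ConstantTerm

section QFactorial

variable {q : ℂ}

lemma multipliable_one_sub_mul_pow (hq1 : ‖q‖ < 1) (a : ℂ) :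
    Multipliable fun i : ℕ => 1 - a * q ^ i := by
  simp only [sub_eq_add_neg]
  refine multipliable_one_add_of_summable ?_
  simpa [norm_mul] using (summable_geometric_of_lt_one (norm_nonneg q) hq1).mul_left ‖a‖

lemma tendsto_prod_one_sub_mul_pow_qinf (hq1 : ‖q‖ < 1) (a : ℂ) :
    Tendsto (fun N => ∏ i ∈ range N, (1 - a * q ^ i)) atTop (𝓝 (qinf q a)) :=
  (multipliable_one_sub_mul_pow hq1 a).hasProd.tendsto_prod_nat

lemma qinf_eq_one_sub_mul_qinf (hq1 : ‖q‖ < 1) (a : ℂ) :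
    qinf q a = (1 - a) * qinf q (a * q) := by
  have hshift (i : ℕ) : 1 - a * q ^ (i + 1) = 1 - a * q * q ^ i := by ring
  have hmul : Multipliable fun i : ℕ => 1 - a * q ^ (i + 1) := by
    simpa only [hshift] using multipliable_one_sub_mul_pow hq1 (a * q)
  have hfirst := tprod_eq_zero_mul' (f := fun i : ℕ => 1 - a * q ^ i) hmul
  rwa [pow_zero, mul_one, tprod_congr hshift] at hfirst

lemma qinf_eq_zero {a : ℂ} {i : ℕ} (h : a * q ^ i = 1) : qinf q a = 0 :=
  tprod_of_exists_eq_zero ⟨i, sub_eq_zero.2 h.symm⟩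

lemma qinf_ne_zero (hq1 : ‖q‖ < 1) {a : ℂ} (ha : ∀ i : ℕ, a * q ^ i ≠ 1) : qinf q a ≠ 0 := by
  simp only [qinf, sub_eq_add_neg]
  refine tprod_one_add_ne_zero_of_summable (fun i => ?_) ?_
  · rw [← sub_eq_add_neg]
    exact sub_ne_zero.2 (ha i).symm
  · simpa [norm_mul] using (summable_geometric_of_lt_one (norm_nonneg q) hq1).mul_left ‖a‖

lemma norm_mul_pow_le (hq1 : ‖q‖ < 1) (a : ℂ) (n : ℕ) : ‖a * q ^ n‖ ≤ ‖a‖ := by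
  rw [norm_mul, norm_pow]
  exact mul_le_of_le_one_right (norm_nonneg a) (pow_le_one₀ (norm_nonneg q) hq1.le)

lemma qinf_ne_zero_of_norm_lt_one (hq1 : ‖q‖ < 1) {a : ℂ} (ha : ‖a‖ < 1) : qinf q a ≠ 0 :=
  qinf_ne_zero hq1 fun i h =>
    ((norm_mul_pow_le hq1 a i).trans_lt ha).ne (by rw [h, norm_one])

lemma continuous_qinf (hq1 : ‖q‖ < 1) : Continuous (qinf q) := by
  refine continuous_iff_continuousAt.2 fun a => ?_
  simp only [ContinuousAt, qinf, sub_eq_add_neg]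
  refine tendsto_tprod_one_add_of_dominated_convergence
    ((summable_geometric_of_lt_one (norm_nonneg q) hq1).mul_left (‖a‖ + 1))
    (fun i => Continuous.tendsto (f := fun b => -(b * q ^ i)) (by fun_prop) a) ?_
  filter_upwards [continuous_norm.continuousAt.eventually_le_const (lt_add_one ‖a‖)] with b hb i
  rw [norm_neg, norm_mul, norm_pow]
  gcongr

lemma norm_qinf_le (hq1 : ‖q‖ < 1) {a : ℂ} {s : ℝ} (ha : ‖a‖ ≤ s) :
    ‖qinf q a‖ ≤ ‖qinf (‖q‖ : ℂ) (-(s : ℂ))‖ := by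
  have hs : 0 ≤ s := (norm_nonneg a).trans ha
  refine le_of_tendsto_of_tendsto' (tendsto_prod_one_sub_mul_pow_qinf hq1 a).norm
    (tendsto_prod_one_sub_mul_pow_qinf (by simpa using hq1) _).norm fun N => ?_
  rw [norm_prod, norm_prod]
  refine Finset.prod_le_prod (fun _ _ => norm_nonneg _) fun i _ => ?_
  calc ‖1 - a * q ^ i‖ ≤ 1 + s * ‖q‖ ^ i := by
        refine (norm_sub_le _ _).trans ?_
        rw [norm_one, norm_mul, norm_pow]
        gcongr
    _ = ‖((1 + s * ‖q‖ ^ i : ℝ) : ℂ)‖ := (Complex.norm_of_nonneg (by positivity)).symm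
    _ = ‖1 - -(s : ℂ) * (‖q‖ : ℂ) ^ i‖ := by push_cast; ring_nf

lemma qinf_mul_eq_qinf_mul_of_tendsto (hq1 : ‖q‖ < 1) {u v L : ℂ} {S : ℕ → ℂ}
    (hS : ∀ N, (1 - u * q ^ N) * S N = (1 - v * q ^ N) * S (N + 1))
    (hL : Tendsto S atTop (𝓝 L)) : qinf q u * S 0 = qinf q v * L := by
  have hprod (N : ℕ) : (∏ i ∈ range N, (1 - u * q ^ i)) * S 0 =
      (∏ i ∈ range N, (1 - v * q ^ i)) * S N := by
    induction N with
    | zero => simp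
    | succ N ih =>
      rw [prod_range_succ, prod_range_succ]
      linear_combination (1 - u * q ^ N) * ih + (∏ i ∈ range N, (1 - v * q ^ i)) * hS N
  refine tendsto_nhds_unique ((tendsto_prod_one_sub_mul_pow_qinf hq1 u).mul_const (S 0)) ?_
  simpa only [hprod] using (tendsto_prod_one_sub_mul_pow_qinf hq1 v).mul hL

@[simp] lemma qpoch_zero (q a : ℂ) : qpoch q a 0 = 1 := by simp [qpoch]

lemma qpoch_natCast (q a : ℂ) (n : ℕ) : qpoch q a n = ∏ i ∈ range n, (1 - a * q ^ i) := by
  simp [qpoch]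

lemma qpoch_natCast_succ (q a : ℂ) (n : ℕ) :
    qpoch q a (n + 1 : ℕ) = (1 - a * q ^ n) * qpoch q a n := by
  rw [qpoch_natCast, qpoch_natCast, prod_range_succ, mul_comm]

lemma qpoch_natCast_succ' (q a : ℂ) (n : ℕ) :
    qpoch q a (n + 1 : ℕ) = (1 - a) * qpoch q (a * q) n := by
  rw [qpoch_natCast, qpoch_natCast, prod_range_succ', pow_zero, mul_one, mul_comm]
  simp only [pow_succ', mul_assoc]

lemma qpoch_neg_natCast (hq : q ≠ 0) (a : ℂ) (n : ℕ) :
    qpoch q a (-(n : ℤ)) = (qpoch q (a * q ^ (-(n : ℤ))) n)⁻¹ := by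
  rcases n.eq_zero_or_pos with rfl | hn
  · simp
  · rw [qpoch_natCast, qpoch, if_neg (by lia), neg_neg, Int.toNat_natCast]
    simp only [zpow_add₀ hq, zpow_natCast, mul_assoc]

lemma qpoch_add_one (hq : q ≠ 0) (a : ℂ) {n : ℤ} (ha : n < 0 → a * q ^ n ≠ 1) :
    qpoch q a (n + 1) = (1 - a * q ^ n) * qpoch q a n := by
  obtain m | m := n
  · exact_mod_cast qpoch_natCast_succ q a m
  · have hfirst := sub_ne_zero.2 (ha (Int.negSucc_lt_zero m)).symm
    rw [Int.negSucc_eq, ← Nat.cast_succ] at hfirst ⊢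
    have hsucc : -((m + 1 : ℕ) : ℤ) + 1 = -(m : ℤ) := by lia
    have hpow : a * q ^ (-((m + 1 : ℕ) : ℤ)) * q = a * q ^ (-(m : ℤ)) := by
      rw [mul_assoc, ← zpow_add_one₀ hq, hsucc]
    rw [hsucc, qpoch_neg_natCast hq, qpoch_neg_natCast hq, qpoch_natCast_succ', hpow, mul_inv,
      mul_inv_cancel_left₀ hfirst]

lemma qpoch_add_one' (hq : q ≠ 0) {a : ℂ} (ha : a ≠ 1) (n : ℤ) :
    qpoch q a (n + 1) = (1 - a) * qpoch q (a * q) n := by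
  obtain m | m := n
  · exact_mod_cast qpoch_natCast_succ' q a m
  · rw [Int.negSucc_eq, ← Nat.cast_succ]
    have hsucc : -((m + 1 : ℕ) : ℤ) + 1 = -(m : ℤ) := by lia
    have hpow : a * q * q ^ (-((m + 1 : ℕ) : ℤ)) = a * q ^ (-(m : ℤ)) := by
      rw [mul_assoc, ← zpow_one_add₀ hq, add_comm, hsucc]
    have hlast : a * q ^ (-(m : ℤ)) * q ^ m = a := by
      rw [zpow_neg, zpow_natCast, inv_mul_cancel_right₀ (pow_ne_zero m hq)]
    rw [hsucc, qpoch_neg_natCast hq, qpoch_neg_natCast hq, hpow, qpoch_natCast_succ, hlast,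
      mul_inv, mul_inv_cancel_left₀ (sub_ne_zero.2 ha.symm)]

lemma qpoch_natCast_mul_qinf (hq1 : ‖q‖ < 1) (a : ℂ) (n : ℕ) :
    qpoch q a n * qinf q (a * q ^ n) = qinf q a := by
  induction n with
  | zero => simp
  | succ n ih =>
    rw [qpoch_natCast_succ, ← ih, qinf_eq_one_sub_mul_qinf hq1 (a * q ^ n), pow_succ, mul_assoc a]
    ring

lemma mul_zpow_ne_one_of_neg (hq : q ≠ 0) {a : ℂ} (ha : ∀ n : ℕ, a ≠ q ^ (n + 1)) {n : ℤ}
    (hn : n < 0) : a * q ^ n ≠ 1 := by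
  obtain ⟨m, rfl⟩ : ∃ m : ℕ, n = -((m + 1 : ℕ) : ℤ) := ⟨(-n).toNat - 1, by lia⟩
  rw [zpow_neg, zpow_natCast, ← div_eq_mul_inv, Ne, div_eq_one_iff_eq (pow_ne_zero _ hq)]
  exact ha m

lemma qpoch_mul_qinf (hq : q ≠ 0) (hq1 : ‖q‖ < 1) {a : ℂ} (ha : ∀ n : ℕ, a ≠ q ^ (n + 1))
    (n : ℤ) : qpoch q a n * qinf q (a * q ^ n) = qinf q a := by
  have hstep (n : ℤ) : qpoch q a (n + 1) * qinf q (a * q ^ (n + 1)) =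
      qpoch q a n * qinf q (a * q ^ n) := by
    rw [qpoch_add_one hq a (mul_zpow_ne_one_of_neg hq ha), zpow_add_one₀ hq, ← mul_assoc a,
      qinf_eq_one_sub_mul_qinf hq1 (a * q ^ n)]
    ring
  induction n using Int.induction_on with
  | zero => simp
  | succ n ih => rw [hstep, ih]
  | pred n ih => rw [← ih, ← hstep, sub_add_cancel]

lemma qpoch_self_ne_zero (hq1 : ‖q‖ < 1) (n : ℕ) : qpoch q q n ≠ 0 :=
  left_ne_zero_of_mul (b := qinf q (q * q ^ n)) <| by
    rw [qpoch_natCast_mul_qinf hq1]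
    exact qinf_ne_zero_of_norm_lt_one hq1 hq1

end QFactorial

section QBinomial

variable {q x : ℂ}

lemma tendsto_one_sub_mul_pow (hq1 : ‖q‖ < 1) (a : ℂ) :
    Tendsto (fun n : ℕ => 1 - a * q ^ n) atTop (𝓝 1) := by
  simpa using ((tendsto_pow_atTop_nhds_zero_of_norm_lt_one hq1).const_mul a).const_sub 1

lemma summable_norm_qBinomial (hq1 : ‖q‖ < 1) (a : ℂ) (hx : ‖x‖ < 1) :
    Summable fun n : ℕ => ‖qpoch q a n / qpoch q q n * x ^ n‖ := by
  refine summable_norm_of_succ_eq_mul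
    (ρ := fun n => (1 - a * q ^ n) / (1 - q * q ^ n) * x) (fun n => ?_) ?_ hx
  · rw [qpoch_natCast_succ, qpoch_natCast_succ, mul_div_mul_comm, pow_succ']
    ring
  · simpa using (((tendsto_one_sub_mul_pow hq1 a).div (tendsto_one_sub_mul_pow hq1 q)
      one_ne_zero).mul_const x).norm

lemma one_sub_mul_tsum_qBinomial (hq1 : ‖q‖ < 1) (a : ℂ) (hx : ‖x‖ < 1) :
    (1 - x) * ∑' n : ℕ, qpoch q a n / qpoch q q n * x ^ n =
      (1 - a * x) * ∑' n : ℕ, qpoch q a n / qpoch q q n * (x * q) ^ n := by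
  set c : ℕ → ℂ := fun n => qpoch q a n / qpoch q q n with hc
  have hrec (n : ℕ) : (1 - q ^ (n + 1)) * c (n + 1) = (1 - a * q ^ n) * c n := by
    have hden := qpoch_self_ne_zero hq1 (n + 1)
    simp only [hc]
    rw [qpoch_natCast_succ] at hden ⊢
    rw [qpoch_natCast_succ, pow_succ', mul_div_mul_comm, ← mul_assoc,
      mul_div_cancel₀ _ (left_ne_zero_of_mul hden)]
  have hsum {w : ℂ} (hw : ‖w‖ < 1) : Summable fun n => c n * w ^ n :=
    (summable_norm_qBinomial hq1 a hw).of_norm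
  have hx' := hsum hx
  have hxq := hsum ((pow_one q ▸ norm_mul_pow_le hq1 x 1).trans_lt hx)
  have hdiff : ∑' n, c n * x ^ n - ∑' n, c n * (x * q) ^ n =
      x * ∑' n, c n * x ^ n - a * x * ∑' n, c n * (x * q) ^ n := by
    rw [← hx'.tsum_sub hxq, (hx'.sub hxq).tsum_eq_zero_add, ← tsum_mul_left, ← tsum_mul_left,
      ← (hx'.mul_left x).tsum_sub (hxq.mul_left (a * x)), pow_zero, pow_zero, sub_self, zero_add]
    refine tsum_congr fun n => ?_
    rw [mul_pow, mul_pow]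
    linear_combination x ^ (n + 1) * hrec n
  linear_combination hdiff

lemma hasSum_qBinomial (hq1 : ‖q‖ < 1) (a : ℂ) (hx : ‖x‖ < 1) :
    HasSum (fun n : ℕ => qpoch q a n / qpoch q q n * x ^ n) (qinf q (a * x) / qinf q x) := by
  have hsum := summable_norm_qBinomial hq1 a hx
  have hstep (N : ℕ) := one_sub_mul_tsum_qBinomial hq1 a ((norm_mul_pow_le hq1 x N).trans_lt hx)
  have hlim : Tendsto (fun N : ℕ => ∑' n : ℕ, qpoch q a n / qpoch q q n * (x * q ^ N) ^ n) atTop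
      (𝓝 (∑' n : ℕ, qpoch q a n / qpoch q q n * 0 ^ n)) := by
    refine tendsto_tsum_of_dominated_convergence hsum (fun n => ?_) (.of_forall fun N n => ?_)
    · refine Tendsto.const_mul _ (Tendsto.pow ?_ n)
      simpa using (tendsto_pow_atTop_nhds_zero_of_norm_lt_one hq1).const_mul x
    · rw [norm_mul, norm_mul, norm_pow, norm_pow x]
      gcongr
      exact norm_mul_pow_le hq1 x N
  rw [tsum_eq_single 0 fun n hn => by rw [zero_pow hn, mul_zero]] at hlim
  have hiter := qinf_mul_eq_qinf_mul_of_tendsto hq1 (u := x) (v := a * x)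
    (fun N => by simpa only [mul_assoc, pow_succ] using hstep N) hlim
  refine (hsum.of_norm.hasSum_iff).2 ?_
  rw [eq_div_iff (qinf_ne_zero_of_norm_lt_one hq1 hx)]
  simpa [mul_comm] using hiter

end QBinomial

section RamanujanPsi

variable {q e f t : ℂ}

/-- The general term of the bilateral series `₁ψ₁(e; f; q, t)`, multiplied by `(f;q)_∞`. The factor
`(f;q)_∞ / (f;q)_n` is written as `(f q^n;q)_∞`, which makes sense for every `f`, including `f = q`,
where the series is evaluated. -/
noncomputable def psiTerm (q e f t : ℂ) (n : ℤ) : ℂ := qpoch q e n * qinf q (f * q ^ n) * t ^ n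

/-- The regularised `₁ψ₁` series: the sum of `psiTerm q e f t` over all integers. -/
noncomputable def ramanujanPsi (q e f t : ℂ) : ℂ := ∑' n : ℤ, psiTerm q e f t n

/-- A sequence whose norm dominates `psiTerm q e f' t` for all `‖f'‖ ≤ ‖f‖`. Because the argument of
the infinite product is negative, the ratio of consecutive terms has no poles. -/
noncomputable def psiMajorant (q e f t : ℂ) (n : ℤ) : ℂ :=
  qpoch q e n * qinf (‖q‖ : ℂ) (-(‖f‖ : ℂ) * (‖q‖ : ℂ) ^ n) * t ^ n

lemma norm_psiTerm_le_norm_psiMajorant (hq1 : ‖q‖ < 1) (e t : ℂ) {f' : ℂ} (hf : ‖f'‖ ≤ ‖f‖)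
    (n : ℤ) : ‖psiTerm q e f' t n‖ ≤ ‖psiMajorant q e f t n‖ := by
  have hbound : ‖qinf q (f' * q ^ n)‖ ≤ ‖qinf (‖q‖ : ℂ) (-(‖f‖ : ℂ) * (‖q‖ : ℂ) ^ n)‖ := by
    refine (norm_qinf_le hq1 (s := ‖f‖ * ‖q‖ ^ n) ?_).trans_eq (by push_cast; rw [neg_mul])
    rw [norm_mul, norm_zpow]
    gcongr
  simp only [psiTerm, psiMajorant, norm_mul]
  gcongr

lemma one_add_norm_mul_zpow_ne_zero (q f : ℂ) (n : ℤ) :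
    1 + (‖f‖ : ℂ) * (‖q‖ : ℂ) ^ n ≠ 0 := by
  have hpos : 0 < 1 + ‖f‖ * ‖q‖ ^ n := by positivity
  exact_mod_cast hpos.ne'

lemma psiMajorant_add_one (hq : q ≠ 0) (hq1 : ‖q‖ < 1) (he : ∀ n : ℕ, e ≠ q ^ (n + 1)) (f : ℂ)
    (ht : t ≠ 0) (n : ℤ) :
    psiMajorant q e f t (n + 1) =
      (1 - e * q ^ n) * t / (1 + (‖f‖ : ℂ) * (‖q‖ : ℂ) ^ n) * psiMajorant q e f t n := by
  have hQ : (‖q‖ : ℂ) ≠ 0 := by simpa using hq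
  simp only [psiMajorant]
  rw [qinf_eq_one_sub_mul_qinf (by simpa using hq1) (-(‖f‖ : ℂ) * (‖q‖ : ℂ) ^ n),
    qpoch_add_one hq e (mul_zpow_ne_one_of_neg hq he), zpow_add_one₀ hQ, zpow_add_one₀ ht,
    ← mul_assoc (-(‖f‖ : ℂ)), neg_mul, sub_neg_eq_add]
  field_simp [one_add_norm_mul_zpow_ne_zero q f n]

lemma tendsto_norm_psiMajorant_ratio_atTop (hq1 : ‖q‖ < 1) (e f t : ℂ) :
    Tendsto (fun n : ℕ => ‖(1 - e * q ^ (n : ℤ)) * t / (1 + (‖f‖ : ℂ) * (‖q‖ : ℂ) ^ (n : ℤ))‖)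
      atTop (𝓝 ‖t‖) := by
  have hden := tendsto_one_sub_mul_pow (q := (‖q‖ : ℂ)) (by simpa using hq1) (-(‖f‖ : ℂ))
  simpa using (((tendsto_one_sub_mul_pow hq1 e).mul_const t).div hden one_ne_zero).norm

lemma tendsto_norm_psiMajorant_ratio_atBot (hq : q ≠ 0) (hq1 : ‖q‖ < 1) (f : ℂ)
    (het : e * t ≠ 0) :
    Tendsto (fun n : ℕ => ‖((1 - e * q ^ (-((n : ℤ) + 1))) * t /
      (1 + (‖f‖ : ℂ) * (‖q‖ : ℂ) ^ (-((n : ℤ) + 1))))⁻¹‖) atTop (𝓝 (‖f‖ / ‖e * t‖)) := by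
  have hQ : (‖q‖ : ℂ) ≠ 0 := by simpa using hq
  have hpow {w : ℂ} (hw : ‖w‖ < 1) : Tendsto (fun n : ℕ => w ^ (n + 1)) atTop (𝓝 0) :=
    (tendsto_pow_atTop_nhds_zero_of_norm_lt_one hw).comp (tendsto_add_atTop_nat 1)
  have hratio (n : ℕ) : ‖((1 - e * q ^ (-((n : ℤ) + 1))) * t /
      (1 + (‖f‖ : ℂ) * (‖q‖ : ℂ) ^ (-((n : ℤ) + 1))))⁻¹‖ =
      ‖((‖q‖ : ℂ) ^ (n + 1) + ‖f‖) / ((q ^ (n + 1) - e) * t)‖ := by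
    have hnum : 1 + (‖f‖ : ℂ) * (‖q‖ : ℂ) ^ (-((n : ℤ) + 1)) =
        ((‖q‖ : ℂ) ^ (n + 1) + ‖f‖) / (‖q‖ : ℂ) ^ (n + 1) := by
      rw [zpow_neg, ← Nat.cast_succ, zpow_natCast]
      field_simp
    have hden : (1 - e * q ^ (-((n : ℤ) + 1))) * t = (q ^ (n + 1) - e) * t / q ^ (n + 1) := by
      rw [zpow_neg, ← Nat.cast_succ, zpow_natCast]
      field_simp
    rw [hnum, hden, inv_div, norm_div, norm_div, norm_div, norm_div, norm_pow, norm_pow,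
      Complex.norm_real, norm_norm, div_div_div_cancel_right₀ (by simpa using hq)]
  simp only [hratio]
  have hlim := ((hpow (w := (‖q‖ : ℂ)) (by simpa using hq1)).add_const (‖f‖ : ℂ)).div
    (((hpow hq1).sub_const e).mul_const t) (by simpa using het)
  simpa using hlim.norm

lemma summable_norm_psiMajorant (hq : q ≠ 0) (hq1 : ‖q‖ < 1) (he : ∀ n : ℕ, e ≠ q ^ (n + 1))
    (ht : ‖t‖ < 1) (hft : ‖f‖ < ‖e * t‖) : Summable fun n => ‖psiMajorant q e f t n‖ := by
  have het : 0 < ‖e * t‖ := (norm_nonneg f).trans_lt hft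
  have ht0 : t ≠ 0 := right_ne_zero_of_mul (norm_pos_iff.1 het)
  exact summable_norm_of_add_one_eq_mul (psiMajorant_add_one hq hq1 he f ht0)
    (fun n hn => div_ne_zero
      (mul_ne_zero (sub_ne_zero.2 (mul_zpow_ne_one_of_neg hq he hn).symm) ht0)
      (one_add_norm_mul_zpow_ne_zero q f n))
    (tendsto_norm_psiMajorant_ratio_atTop hq1 e f t) ht
    (tendsto_norm_psiMajorant_ratio_atBot hq hq1 f (norm_pos_iff.1 het)) ((div_lt_one het).2 hft)

lemma hasSum_psiTerm (hq : q ≠ 0) (hq1 : ‖q‖ < 1) (he : ∀ n : ℕ, e ≠ q ^ (n + 1))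
    (ht : ‖t‖ < 1) (hft : ‖f‖ < ‖e * t‖) : HasSum (psiTerm q e f t) (ramanujanPsi q e f t) :=
  (Summable.of_norm_bounded (summable_norm_psiMajorant hq hq1 he ht hft)
    (norm_psiTerm_le_norm_psiMajorant hq1 e t le_rfl)).hasSum

lemma psiTerm_sub_mul_psiTerm_add_one (hq : q ≠ 0) (hq1 : ‖q‖ < 1)
    (he : ∀ n : ℕ, e ≠ q ^ (n + 1)) (he0 : e ≠ 0) (ht : t ≠ 0) (n : ℤ) :
    psiTerm q e f t n - f / (e * t) * psiTerm q e f t (n + 1) =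
      (1 - f / e) * psiTerm q e (f * q) t n := by
  have hpow : f * q ^ (n + 1) = f * q ^ n * q := by rw [zpow_add_one₀ hq, mul_assoc]
  simp only [psiTerm]
  rw [qpoch_add_one hq e (mul_zpow_ne_one_of_neg hq he), hpow, mul_right_comm f q,
    qinf_eq_one_sub_mul_qinf hq1 (f * q ^ n), zpow_add_one₀ ht]
  field_simp
  ring

lemma one_sub_mul_ramanujanPsi (hq : q ≠ 0) (hq1 : ‖q‖ < 1) (he : ∀ n : ℕ, e ≠ q ^ (n + 1))
    (ht : ‖t‖ < 1) (hft : ‖f‖ < ‖e * t‖) :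
    (1 - f / (e * t)) * ramanujanPsi q e f t = (1 - f / e) * ramanujanPsi q e (f * q) t := by
  obtain ⟨he0, ht0⟩ := mul_ne_zero_iff.1 (norm_pos_iff.1 ((norm_nonneg f).trans_lt hft))
  have hsum := hasSum_psiTerm hq hq1 he ht hft
  have hshift : HasSum (fun n => psiTerm q e f t (n + 1)) (ramanujanPsi q e f t) :=
    ((Equiv.addRight (1 : ℤ)).hasSum_iff (f := psiTerm q e f t)).2 hsum
  have hdiff : HasSum (fun n => (1 - f / e) * psiTerm q e (f * q) t n)
      (ramanujanPsi q e f t - f / (e * t) * ramanujanPsi q e f t) := by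
    simpa only [psiTerm_sub_mul_psiTerm_add_one hq hq1 he he0 ht0] using
      hsum.sub (hshift.mul_left (f / (e * t)))
  rw [sub_mul, one_mul, ← hdiff.tsum_eq, tsum_mul_left, ramanujanPsi]

lemma qinf_mul_ramanujanPsi (hq : q ≠ 0) (hq1 : ‖q‖ < 1) (he : ∀ n : ℕ, e ≠ q ^ (n + 1))
    (ht : ‖t‖ < 1) (hft : ‖f‖ < ‖e * t‖) :
    qinf q (f / (e * t)) * ramanujanPsi q e f t = qinf q (f / e) * ramanujanPsi q e 0 t := by
  have hlim : Tendsto (fun N : ℕ => ramanujanPsi q e (f * q ^ N) t) atTop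
      (𝓝 (ramanujanPsi q e 0 t)) := by
    refine tendsto_tsum_of_dominated_convergence (summable_norm_psiMajorant hq hq1 he ht hft)
      (fun n => ?_) (.of_forall fun N => norm_psiTerm_le_norm_psiMajorant hq1 e t
        (norm_mul_pow_le hq1 f N))
    have harg : Tendsto (fun N : ℕ => f * q ^ N * q ^ n) atTop (𝓝 (0 * q ^ n)) := by
      refine Tendsto.mul_const _ ?_
      simpa using (tendsto_pow_atTop_nhds_zero_of_norm_lt_one hq1).const_mul f
    exact ((((continuous_qinf hq1).tendsto _).comp harg).const_mul _).mul_const _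
  have hiter := qinf_mul_eq_qinf_mul_of_tendsto hq1 (u := f / (e * t)) (v := f / e)
    (fun N => ?_) hlim
  · simpa using hiter
  · have hstep := one_sub_mul_ramanujanPsi hq hq1 he ht
      ((norm_mul_pow_le hq1 f N).trans_lt hft)
    rwa [mul_div_right_comm, mul_div_right_comm, mul_assoc f, ← pow_succ] at hstep

lemma ramanujanPsi_self (hq : q ≠ 0) (hq1 : ‖q‖ < 1) (e : ℂ) (ht : ‖t‖ < 1) :
    ramanujanPsi q e q t = qinf q q * (qinf q (e * t) / qinf q t) := by
  have hneg : ∀ n ∉ Set.range ((↑) : ℕ → ℤ), psiTerm q e q t n = 0 := by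
    intro n hn
    obtain ⟨m, rfl⟩ : ∃ m : ℕ, n = -((m + 1 : ℕ) : ℤ) := by
      refine ⟨(-n).toNat - 1, ?_⟩
      have : ¬ 0 ≤ n := fun h => hn ⟨n.toNat, Int.toNat_of_nonneg h⟩
      lia
    have hqinf : qinf q (q * q ^ (-((m + 1 : ℕ) : ℤ))) = 0 := qinf_eq_zero (i := m) <| by
      rw [mul_right_comm, ← pow_succ', zpow_neg, zpow_natCast,
        mul_inv_cancel₀ (pow_ne_zero _ hq)]
    rw [psiTerm, hqinf, mul_zero, zero_mul]
  have hterm (n : ℕ) : psiTerm q e q t n = qinf q q * (qpoch q e n / qpoch q q n * t ^ n) := by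
    rw [psiTerm, ← qpoch_natCast_mul_qinf hq1 q n, zpow_natCast, zpow_natCast]
    field_simp [qpoch_self_ne_zero hq1 n]
  refine ((Nat.cast_injective.hasSum_iff hneg).1 ?_).tsum_eq
  exact ((hasSum_qBinomial hq1 e ht).mul_left (qinf q q)).congr_fun hterm

lemma ramanujanPsi_div_div (hq : q ≠ 0) (he : e ≠ q) (f : ℂ) (ht : t ≠ 0) :
    ramanujanPsi q (e / q) (f / q) t = (1 - e / q) * t * ramanujanPsi q e f t := by
  have hterm (n : ℤ) : psiTerm q (e / q) (f / q) t (n + 1) =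
      (1 - e / q) * t * psiTerm q e f t n := by
    have hpow : f / q * q ^ (n + 1) = f * q ^ n := by
      rw [zpow_add_one₀ hq]
      field_simp
    rw [psiTerm, psiTerm, qpoch_add_one' hq (by rwa [Ne, div_eq_one_iff_eq hq]), hpow,
      div_mul_cancel₀ e hq, zpow_add_one₀ ht]
    ring
  rw [ramanujanPsi, ← (Equiv.addRight (1 : ℤ)).tsum_eq (psiTerm q (e / q) (f / q) t),
    ramanujanPsi, ← tsum_mul_left]
  exact tsum_congr hterm

lemma ramanujanPsi_zero_of_norm_lt (hq : q ≠ 0) (hq1 : ‖q‖ < 1)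
    (he : ∀ n : ℕ, e ≠ q ^ (n + 1)) (ht : ‖t‖ < 1) (hqet : ‖q‖ < ‖e * t‖) :
    qinf q (q / e) * qinf q t * ramanujanPsi q e 0 t =
      qinf q q * qinf q (e * t) * qinf q (q / (e * t)) := by
  have hne := qinf_ne_zero_of_norm_lt_one hq1 ht
  have hiter := qinf_mul_ramanujanPsi hq hq1 he ht hqet
  rw [ramanujanPsi_self hq hq1 e ht] at hiter
  rw [mul_right_comm, ← hiter]
  field_simp

lemma ramanujanPsi_zero_of_div (hq : q ≠ 0) (hq1 : ‖q‖ < 1) (he : e ≠ q) (het : e * t ≠ 0)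
    (h : qinf q (q / (e / q)) * qinf q t * ramanujanPsi q (e / q) 0 t =
      qinf q q * qinf q (e / q * t) * qinf q (q / (e / q * t))) :
    qinf q (q / e) * qinf q t * ramanujanPsi q e 0 t =
      qinf q q * qinf q (e * t) * qinf q (q / (e * t)) := by
  obtain ⟨he0, ht0⟩ := mul_ne_zero_iff.1 het
  have hshift := ramanujanPsi_div_div hq he 0 ht0
  rw [zero_div] at hshift
  have hnum := qinf_eq_one_sub_mul_qinf hq1 (e / q * t)
  rw [show e / q * t * q = e * t by field_simp] at hnum
  have hnum_inv := qinf_eq_one_sub_mul_qinf hq1 (q / (e * t))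
  rw [show q / (e * t) * q = q / (e / q * t) by field_simp] at hnum_inv
  have hden := qinf_eq_one_sub_mul_qinf hq1 (q / e)
  rw [show q / e * q = q / (e / q) by field_simp] at hden
  rw [hshift, hnum] at h
  rw [hden, hnum_inv]
  calc (1 - q / e) * qinf q (q / (e / q)) * qinf q t * ramanujanPsi q e 0 t
      = -(q / (e * t)) *
          (qinf q (q / (e / q)) * qinf q t * ((1 - e / q) * t * ramanujanPsi q e 0 t)) := by
        field_simp
        ring
    _ = -(q / (e * t)) *
          (qinf q q * ((1 - e / q * t) * qinf q (e * t)) * qinf q (q / (e / q * t))) := by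
        rw [h]
    _ = qinf q q * qinf q (e * t) * ((1 - q / (e * t)) * qinf q (q / (e / q * t))) := by
        field_simp
        ring

lemma ramanujanPsi_zero (hq : q ≠ 0) (hq1 : ‖q‖ < 1) (he : ∀ n : ℕ, e ≠ q ^ (n + 1))
    (ht : ‖t‖ < 1) (het : e * t ≠ 0) :
    qinf q (q / e) * qinf q t * ramanujanPsi q e 0 t =
      qinf q q * qinf q (e * t) * qinf q (q / (e * t)) := by
  obtain ⟨N, hN⟩ := exists_pow_lt_of_lt_one (norm_pos_iff.2 het) hq1
  replace hN : ‖q‖ ^ (N + 1) < ‖e * t‖ :=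
    (pow_le_pow_of_le_one (norm_nonneg q) hq1.le N.le_succ).trans_lt hN
  induction N generalizing e with
  | zero => exact ramanujanPsi_zero_of_norm_lt hq hq1 he ht (by simpa using hN)
  | succ N ih =>
    refine ramanujanPsi_zero_of_div hq hq1 (by simpa using he 0) het (ih (fun n => ?_) ?_ ?_)
    · rw [Ne, div_eq_iff hq, ← pow_succ]
      exact he (n + 1)
    · rw [div_mul_eq_mul_div]
      exact div_ne_zero het hq
    · rwa [div_mul_eq_mul_div, norm_div, lt_div_iff₀ (norm_pos_iff.2 hq), ← pow_succ]

/-- The infinite product that Ramanujan's summation assigns to `₁ψ₁(e; f; q, t)`. -/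
noncomputable def psiProduct (q e f t : ℂ) : ℂ :=
  qinf q q * qinf q (f / e) * qinf q (e * t) * qinf q (q / (e * t)) /
    (qinf q f * qinf q (q / e) * qinf q t * qinf q (f / (e * t)))

lemma hasSum_ramanujan (hq : q ≠ 0) (hq1 : ‖q‖ < 1) (he : ∀ n : ℕ, e ≠ q ^ (n + 1))
    (hf : ∀ n : ℤ, f ≠ q ^ n) (ht : ‖t‖ < 1) (hft : ‖f‖ < ‖e * t‖) :
    HasSum (fun n : ℤ => qpoch q e n / qpoch q f n * t ^ n) (psiProduct q e f t) := by
  have het : 0 < ‖e * t‖ := (norm_nonneg f).trans_lt hft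
  have he0 : e ≠ 0 := left_ne_zero_of_mul (norm_pos_iff.1 het)
  have hf0 : qinf q f ≠ 0 := qinf_ne_zero hq1 fun i h =>
    hf (-i) (by rw [zpow_neg, zpow_natCast]; exact eq_inv_of_mul_eq_one_left h)
  have ht0 : qinf q t ≠ 0 := qinf_ne_zero_of_norm_lt_one hq1 ht
  have hqe0 : qinf q (q / e) ≠ 0 := qinf_ne_zero hq1 fun i h =>
    he i (by rw [pow_succ']; field_simp at h; exact h.symm)
  have hfet0 : qinf q (f / (e * t)) ≠ 0 :=
    qinf_ne_zero_of_norm_lt_one hq1 (by rwa [norm_div, div_lt_one het])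
  have hterm (n : ℤ) : qpoch q e n / qpoch q f n * t ^ n = (qinf q f)⁻¹ * psiTerm q e f t n := by
    have hprod := qpoch_mul_qinf hq hq1 (fun n => mod_cast hf (n + 1)) n
    obtain ⟨hpoch0, hqinf0⟩ := mul_ne_zero_iff.1 (hprod.trans_ne hf0)
    rw [psiTerm, ← hprod]
    field_simp
  have hiter := qinf_mul_ramanujanPsi hq hq1 he ht hft
  have hzero := ramanujanPsi_zero hq hq1 he ht (norm_pos_iff.1 het)
  have hvalue : psiProduct q e f t = (qinf q f)⁻¹ * ramanujanPsi q e f t := by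
    rw [psiProduct]
    field_simp
    linear_combination -(qinf q (q / e) * qinf q t) * hiter - qinf q (f / e) * hzero
  rw [hvalue]
  exact ((hasSum_psiTerm hq hq1 he ht hft).mul_left _).congr_fun hterm

end RamanujanPsi

section TripleSum

variable {q x y z t : ℂ}

/-- The factor of the triple series term that does not involve `e` and `f`. It is the coefficient of
the `(j, k, m)` term, a multiple of `t ^ (m - j - k)`, in the product of the `q`-binomial series in
`x / t`, `y / t` and `z * t`. -/
noncomputable def tripleCoeff (q a b c x y z : ℂ) (p : ℕ × ℕ × ℕ) : ℂ :=
  qpoch q a p.1 / qpoch q q p.1 * x ^ p.1 *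
    (qpoch q b p.2.1 / qpoch q q p.2.1 * y ^ p.2.1 *
      (qpoch q c p.2.2 / qpoch q q p.2.2 * z ^ p.2.2))

lemma tripleTerm_eq_mul_tripleCoeff (q a b c e f x y z : ℂ) (p : ℕ × ℕ × ℕ) :
    tripleTerm q a b c e f x y z p =
      qpoch q e (p.1 + p.2.1 - p.2.2) / qpoch q f (p.1 + p.2.1 - p.2.2) *
        tripleCoeff q a b c x y z p := by
  simp only [tripleTerm, tripleCoeff, div_eq_mul_inv, mul_inv]
  ring

/-- The product of the sums of the `q`-binomial series in `x / t`, `y / t` and `z * t`. -/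
noncomputable def tripleProduct (q a b c x y z t : ℂ) : ℂ :=
  qinf q (a * x / t) / qinf q (x / t) *
    (qinf q (b * y / t) / qinf q (y / t) * (qinf q (c * z * t) / qinf q (z * t)))

lemma hasSum_tripleCoeff (hq1 : ‖q‖ < 1) (a b c : ℂ) (hxt : ‖x‖ < ‖t‖) (hyt : ‖y‖ < ‖t‖)
    (hzt : ‖z * t‖ < 1) :
    HasSum (fun p => tripleCoeff q a b c x y z p * t ^ (-((p.1 : ℤ) + p.2.1 - p.2.2)))
      (tripleProduct q a b c x y z t) := by
  have ht : 0 < ‖t‖ := (norm_nonneg x).trans_lt hxt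
  have hquot {w : ℂ} (hw : ‖w‖ < ‖t‖) : ‖w / t‖ < 1 := by rwa [norm_div, div_lt_one ht]
  have hprod := hasSum_mul_of_hasSum (hasSum_qBinomial hq1 a (hquot hxt))
    (hasSum_mul_of_hasSum (hasSum_qBinomial hq1 b (hquot hyt)) (hasSum_qBinomial hq1 c hzt))
  rw [← mul_div_assoc a, ← mul_div_assoc b, ← mul_assoc c] at hprod
  refine hprod.congr_fun fun p => ?_
  have hpow : t ^ (-((p.1 : ℤ) + p.2.1 - p.2.2)) = t ^ p.2.2 / (t ^ p.1 * t ^ p.2.1) := by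
    rw [neg_sub, zpow_sub₀ (norm_pos_iff.1 ht), zpow_add₀ (norm_pos_iff.1 ht), zpow_natCast,
      zpow_natCast, zpow_natCast]
  rw [hpow, tripleCoeff, div_pow, div_pow, mul_pow]
  simp only [div_eq_mul_inv, mul_inv]
  ring

lemma integrandF_eq_psiProduct_mul_tripleProduct (q a b c e f x y z t : ℂ) :
    integrandF q a b c e f x y z t =
      psiProduct q e f t * tripleProduct q a b c x y z t := by
  simp only [integrandF, psiProduct, tripleProduct, div_eq_mul_inv, mul_inv]
  ring

end TripleSum

theorem triple_sum_eq_contour_integral (q a b c e f x y z : ℂ) (r : ℝ)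
    (hq0 : 0 < ‖q‖) (hq1 : ‖q‖ < 1)
    (he : e ≠ 0)
    (heq : ∀ n : ℕ, 1 ≤ n → e ≠ q ^ n)
    (hfq : ∀ n : ℕ, 1 ≤ n → f ≠ q ^ n)
    (hfq' : ∀ n : ℕ, f ≠ q ^ (-(n : ℤ)))
    (heq' : ∀ n : ℕ, e ≠ q ^ (n + 1))
    (hrx : ‖x‖ < r) (hry : ‖y‖ < r) (hrfe : ‖f / e‖ < r)
    (hr1 : r < 1) (hrz : r * ‖z‖ < 1) :
    Summable (fun p : ℕ × ℕ × ℕ => ‖tripleTerm q a b c e f x y z p‖) ∧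
    (∑' p : ℕ × ℕ × ℕ, tripleTerm q a b c e f x y z p) =
      (2 * (Real.pi : ℂ) * Complex.I)⁻¹ *
        ∮ t in C(0, r), integrandF q a b c e f x y z t / t := by
  have hr : 0 < r := (norm_nonneg x).trans_lt hrx
  have hf (n : ℤ) : f ≠ q ^ n := by
    obtain ⟨k, rfl⟩ | ⟨k, hk, rfl⟩ : (∃ k : ℕ, n = -k) ∨ ∃ k : ℕ, 1 ≤ k ∧ n = k := by
      obtain ⟨k, rfl | rfl⟩ := n.eq_nat_or_neg <;> grind
    exacts [hfq' k, mod_cast hfq k hk]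
  have hpsi : ∀ t ∈ sphere (0 : ℂ) r, HasSum
      (fun n : ℤ => qpoch q e n / qpoch q f n * (t - 0) ^ n) (psiProduct q e f t) := by
    intro t ht
    obtain rfl : ‖t‖ = r := mem_sphere_zero_iff_norm.1 ht
    rw [sub_zero]
    exact hasSum_ramanujan (norm_pos_iff.1 hq0) hq1 heq' hf hr1
      (by rwa [norm_mul, mul_comm, ← div_lt_iff₀ (norm_pos_iff.2 he), ← norm_div])
  have htriple : ∀ t ∈ sphere (0 : ℂ) r, HasSum
      (fun p => tripleCoeff q a b c x y z p * (t - 0) ^ (-((p.1 : ℤ) + p.2.1 - p.2.2)))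
      (tripleProduct q a b c x y z t) := by
    intro t ht
    obtain rfl : ‖t‖ = r := mem_sphere_zero_iff_norm.1 ht
    rw [sub_zero]
    exact hasSum_tripleCoeff hq1 a b c hrx hry (by rwa [norm_mul, mul_comm])
  have hsum := hasSum_circleIntegral_mul_of_hasSum_zpow hr hpsi htriple
  simp only [← integrandF_eq_psiProduct_mul_tripleProduct, ← tripleTerm_eq_mul_tripleCoeff,
    sub_zero] at hsum
  exact ⟨hsum.summable.norm, hsum.tsum_eq⟩
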